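/- Let β > 0 and P_w, P_l, R_w, R_l > 0 be real numbers. Let d_w be the derivative at P_w of the function P ↦ −log σ(β·log(P/R_w) − β·log(P_l/R_l)), and let d_l be the derivative at P_l of the function P ↦ −log σ(β·log(P_w/R_w) − β·log(P/R_l)) (these derivatives exist). Then d_l ≠ 0 and |d_w| / |d_l| = P_l / P_w. -/

import Mathlib

/-! Write `ℓ(t) = -log σ(t)` and let `m` be the reward margin at `(Pw, Pl)`. By the chain rule the
two partial derivatives are `ℓ'(m) * (β / Pw)` and `ℓ'(m) * (-(β / Pl))`. Both contain the same factor
`ℓ'(m) ≠ 0`, which cancels from the quotient together with `β`, leaving `Pl / Pw`. -/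

/-- The logistic sigmoid σ(t) = 1/(1 + exp(−t)). -/
noncomputable def sigmoid (t : ℝ) : ℝ := 1 / (1 + Real.exp (-t))

/-- The logistic loss `t ↦ -log σ(t)` equals `log (1 + exp (-t))`; its derivative is
`-exp (-t) / (1 + exp (-t)) = -σ(-t)`, which never vanishes. -/
lemma hasDerivAt_neg_log_sigmoid (t : ℝ) :
    HasDerivAt (fun x : ℝ => -Real.log (sigmoid x))
      (-Real.exp (-t) / (1 + Real.exp (-t))) t := by
  have h : (fun x : ℝ => -Real.log (sigmoid x)) = fun x => Real.log (1 + Real.exp (-x)) := by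
    funext x
    simp [sigmoid]
  rw [h]
  have h1 : HasDerivAt (fun x : ℝ => 1 + Real.exp (-x)) (-Real.exp (-t)) t := by
    simpa using ((hasDerivAt_neg t).exp).const_add 1
  exact h1.log (by positivity)

/-- The reward term `β log (P / R)` has derivative `β / P`, independent of the reference `R`. -/
lemma hasDerivAt_reward (β : ℝ) {P R : ℝ} (hP : 0 < P) (hR : 0 < R) :
    HasDerivAt (fun x : ℝ => β * Real.log (x / R)) (β / P) P := by
  have h1 : HasDerivAt (fun x : ℝ => x / R) (1 / R) P := (hasDerivAt_id P).div_const R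
  have h := (h1.log (div_pos hP hR).ne').const_mul β
  have e : β * (1 / R / (P / R)) = β / P := by field_simp
  rwa [e] at h

/-- the gradient-magnitude ratio of the DPO loss in
policy-probability space is `|d_w| / |d_l| = P_l / P_w`, with `d_l ≠ 0`. -/
theorem dpo_policy_gradient_ratio (β Pw Pl Rw Rl : ℝ) (hβ : 0 < β)
    (hPw : 0 < Pw) (hPl : 0 < Pl) (hRw : 0 < Rw) (hRl : 0 < Rl) :
    deriv (fun P : ℝ => -Real.log (sigmoid (β * Real.log (Pw / Rw) - β * Real.log (P / Rl)))) Pl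
      ≠ 0 ∧
    |deriv (fun P : ℝ => -Real.log (sigmoid (β * Real.log (P / Rw) - β * Real.log (Pl / Rl)))) Pw| /
      |deriv (fun P : ℝ =>
        -Real.log (sigmoid (β * Real.log (Pw / Rw) - β * Real.log (P / Rl)))) Pl| =
      Pl / Pw := by
  have hw := (hasDerivAt_neg_log_sigmoid
    (β * Real.log (Pw / Rw) - β * Real.log (Pl / Rl))).comp Pw
    ((hasDerivAt_reward β hPw hRw).sub_const (β * Real.log (Pl / Rl)))
  have hl := (hasDerivAt_neg_log_sigmoid
    (β * Real.log (Pw / Rw) - β * Real.log (Pl / Rl))).comp Pl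
    ((hasDerivAt_reward β hPl hRl).const_sub (β * Real.log (Pw / Rw)))
  simp only [Function.comp_def] at hw hl
  rw [hw.deriv, hl.deriv]
  set e := Real.exp (-(β * Real.log (Pw / Rw) - β * Real.log (Pl / Rl))) with he
  have hepos : 0 < e := Real.exp_pos _
  have hc : -e / (1 + e) ≠ 0 := div_ne_zero (neg_ne_zero.mpr hepos.ne') (by positivity)
  generalize -e / (1 + e) = c at hc ⊢
  have hc' : |c| ≠ 0 := abs_ne_zero.mpr hc
  refine ⟨mul_ne_zero hc (neg_ne_zero.mpr (by positivity)), ?_⟩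
  rw [abs_mul, abs_mul, abs_neg, abs_of_pos (div_pos hβ hPw), abs_of_pos (div_pos hβ hPl)]
  field_simp
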